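/- For every k ≥ 1 and every n ≥ 1, the image of Y(Q(n)) in U(Q(n))^{⊗k} under U^{⊗k}∘Δ_k^{op} coincides with its image under ev^{⊗k}∘Δ_k. -/

import Mathlib

noncomputable section
open scoped Classical

/-! # The universal enveloping superalgebra `U(Q(n))` of the queer Lie superalgebra

`U(Q(n))` is presented by even generators `e i j` and odd generators `f i j`
(`1 ≤ i,j ≤ n`) subject to the relations
`[e i j, e k l] = δ_{jk} e i l - δ_{li} e k j`,
`[e i j, f k l] = δ_{jk} f i l - δ_{li} f k j`,
`f i j * f k l + f k l * f i j = δ_{jk} e i l + δ_{li} e k j`. -/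

/-- Generators of `U(Q(n))`: `E i j` (even) and `F i j` (odd). -/
inductive QGen (n : ℕ) : Type
  | E : Fin n → Fin n → QGen n
  | F : Fin n → Fin n → QGen n

/-- Kronecker delta. -/
def kd {n : ℕ} (i j : Fin n) : ℂ := if i = j then 1 else 0

/-- The defining relations of `U(Q(n))`. -/
inductive QRel (n : ℕ) : FreeAlgebra ℂ (QGen n) → FreeAlgebra ℂ (QGen n) → Prop
  | ee (i j k l : Fin n) : QRel n
      (FreeAlgebra.ι ℂ (QGen.E i j) * FreeAlgebra.ι ℂ (QGen.E k l) -
        FreeAlgebra.ι ℂ (QGen.E k l) * FreeAlgebra.ι ℂ (QGen.E i j))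
      (kd j k • FreeAlgebra.ι ℂ (QGen.E i l) - kd l i • FreeAlgebra.ι ℂ (QGen.E k j))
  | ef (i j k l : Fin n) : QRel n
      (FreeAlgebra.ι ℂ (QGen.E i j) * FreeAlgebra.ι ℂ (QGen.F k l) -
        FreeAlgebra.ι ℂ (QGen.F k l) * FreeAlgebra.ι ℂ (QGen.E i j))
      (kd j k • FreeAlgebra.ι ℂ (QGen.F i l) - kd l i • FreeAlgebra.ι ℂ (QGen.F k j))
  | ff (i j k l : Fin n) : QRel n
      (FreeAlgebra.ι ℂ (QGen.F i j) * FreeAlgebra.ι ℂ (QGen.F k l) +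
        FreeAlgebra.ι ℂ (QGen.F k l) * FreeAlgebra.ι ℂ (QGen.F i j))
      (kd j k • FreeAlgebra.ι ℂ (QGen.E i l) + kd l i • FreeAlgebra.ι ℂ (QGen.E k j))

/-- The universal enveloping superalgebra `U(Q(n))`. -/
abbrev UQ (n : ℕ) := RingQuot (QRel n)

/-- The generator `e i j` of `U(Q(n))`. -/
def Ue {n : ℕ} (i j : Fin n) : UQ n :=
  RingQuot.mkAlgHom ℂ (QRel n) (FreeAlgebra.ι ℂ (QGen.E i j))

/-- The generator `f i j` of `U(Q(n))`. -/
def Uf {n : ℕ} (i j : Fin n) : UQ n :=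
  RingQuot.mkAlgHom ℂ (QRel n) (FreeAlgebra.ι ℂ (QGen.F i j))

/-- Sergeev's elements `e_{ij}^{(m)}` and `f_{ij}^{(m)}` of `U(Q(n))`, defined recursively by
`e^{(0)} = δ`, `f^{(0)} = 0`,
`e_{ij}^{(m)} = Σ_k e_{ik} e_{kj}^{(m-1)} + (-1)^{m+1} Σ_k f_{ik} f_{kj}^{(m-1)}`,
`f_{ij}^{(m)} = Σ_k e_{ik} f_{kj}^{(m-1)} + (-1)^{m+1} Σ_k f_{ik} e_{kj}^{(m-1)}`. -/
def efU (n : ℕ) : ℕ → (Fin n → Fin n → UQ n) × (Fin n → Fin n → UQ n)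
  | 0 => (fun i j => algebraMap ℂ (UQ n) (kd i j), fun _ _ => 0)
  | m + 1 =>
      (fun i j => (∑ k, Ue i k * (efU n m).1 k j) +
        (-1 : ℂ) ^ m • ∑ k, Uf i k * (efU n m).2 k j,
       fun i j => (∑ k, Ue i k * (efU n m).2 k j) +
        (-1 : ℂ) ^ m • ∑ k, Uf i k * (efU n m).1 k j)

/-- `e_{ij}^{(m)}`. -/
def eU {n : ℕ} (m : ℕ) (i j : Fin n) : UQ n := (efU n m).1 i j
/-- `f_{ij}^{(m)}`. -/
def fU {n : ℕ} (m : ℕ) (i j : Fin n) : UQ n := (efU n m).2 i j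

/-- For `l ∣ n`, the index `l(p-1)+i` of `{1,…,n}` (0-based: block `p`, position `i`). -/
def bidx {n l : ℕ} (h : l ∣ n) (p : Fin (n / l)) (i : Fin l) : Fin n :=
  ⟨l * p.val + i.val, by
    have h1 : i.val < l := i.isLt
    have h2 : p.val + 1 ≤ n / l := p.isLt
    have h3 : l * (p.val + 1) ≤ l * (n / l) := Nat.mul_le_mul_left l h2
    have h4 : n / l * l ≤ n := Nat.div_mul_le_self n l
    have h5 : l * (p.val + 1) = l * p.val + l := Nat.mul_succ l p.val
    have h6 : l * (n / l) = n / l * l := Nat.mul_comm l (n / l)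
    omega⟩

/-! # The character `χ`, the left ideal `I_χ` and the finite W-algebra data

Here `l ∣ n` and `χ` corresponds to the even nilpotent element of `Q(n)` all of whose
Jordan blocks have size `l`.  The subalgebra `m = ⊕_{j<0} g_j` is spanned by the
elements `e_{l(p-1)+i+k, l(q-1)+i}` and `f_{l(p-1)+i+k, l(q-1)+i}` (`k ≥ 1`), and
`χ(e_{l(p-1)+i+1, l(q-1)+i}) = δ_{pq}` and `χ = 0` on the other basis elements. -/

/-- The set of elements `a - χ(a)` for `a` ranging over the standard basis of `m`;
(rows/columns written 0-based: `a` is the position of the row inside its block `p`,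
`b` the position of the column inside its block `q`, with `b < a`). -/
def mSet (n l : ℕ) (h : l ∣ n) : Set (UQ n) :=
  { x : UQ n | ∃ (p q : Fin (n / l)) (a b : Fin l), b.val < a.val ∧
      (x = Ue (bidx h p a) (bidx h q b) -
            algebraMap ℂ (UQ n) (if a.val = b.val + 1 ∧ p = q then 1 else 0) ∨
       x = Uf (bidx h p a) (bidx h q b)) }

/-- The left ideal `I_χ` of `U(Q(n))` generated by the `a - χ(a)`, `a ∈ m`. -/
def Ichi (n l : ℕ) (h : l ∣ n) : Submodule (UQ n) (UQ n) :=
  Submodule.span (UQ n) (mSet n l h)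

/-- The quotient `U(Q(n))/I_χ` (as a `ℂ`-vector space). -/
abbrev Wq (n l : ℕ) (h : l ∣ n) := UQ n ⧸ (Ichi n l h).restrictScalars ℂ

/-- The quotient map `π : U(Q(n)) → U(Q(n))/I_χ`. -/
def piq (n l : ℕ) (h : l ∣ n) : UQ n →ₗ[ℂ] Wq n l h :=
  ((Ichi n l h).restrictScalars ℂ).mkQ

/-- `y` super-commutes with `m` into `I_χ`:  `[a, y] ∈ I_χ` for every `a` in the standard
basis of `m`.  Here the super-commutator of the odd element `f` with (the possibly
non-homogeneous) `y` is `f * y - σ(y) * f`, where `σ` is the parity involution of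
`U(Q(n))` (the algebra automorphism fixing the `e`'s and negating the `f`'s). -/
def Wcond {n l : ℕ} (h : l ∣ n) (σ : UQ n →ₐ[ℂ] UQ n) (y : UQ n) : Prop :=
  ∀ (p q : Fin (n / l)) (a b : Fin l), b.val < a.val →
    (Ue (bidx h p a) (bidx h q b) * y - y * Ue (bidx h p a) (bidx h q b) ∈ Ichi n l h) ∧
    (Uf (bidx h p a) (bidx h q b) * y - σ y * Uf (bidx h p a) (bidx h q b) ∈ Ichi n l h)

/-- The finite W-algebra `W_χ = {π(y) | [a, y] ∈ I_χ for all a ∈ m}`, as a subset of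
`U(Q(n))/I_χ`.  (Its product is `π(y₁)·π(y₂) = π(y₁y₂)`.) -/
def WchiSet (n l : ℕ) (h : l ∣ n) (σ : UQ n →ₐ[ℂ] UQ n) : Set (Wq n l h) :=
  { w : Wq n l h | ∃ y : UQ n, Wcond h σ y ∧ piq n l h y = w }

/-- The standard basis elements of the parabolic subalgebra `p = ⊕_{j≥0} g_j`. -/
def pSet (n l : ℕ) (h : l ∣ n) : Set (UQ n) :=
  { x : UQ n | ∃ (p q : Fin (n / l)) (a b : Fin l), a.val ≤ b.val ∧
      (x = Ue (bidx h p a) (bidx h q b) ∨ x = Uf (bidx h p a) (bidx h q b)) }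

/-- The standard basis elements of the nilradical `n = ⊕_{j>0} g_j` of `p`. -/
def nSet (n l : ℕ) (h : l ∣ n) : Set (UQ n) :=
  { x : UQ n | ∃ (p q : Fin (n / l)) (a b : Fin l), a.val < b.val ∧
      (x = Ue (bidx h p a) (bidx h q b) ∨ x = Uf (bidx h p a) (bidx h q b)) }

/-- The kernel of the Harish-Chandra projection `ϑ : U(p) → U(g₀)`, realized inside
`U(Q(n))`: the `ℂ`-span of `U(p)·n`.  (By the PBW theorem, `U(g) = U(p) ⊕ I_χ` and
`U(p) = U(g₀) ⊕ U(p)n`, so for `y ∈ U(g)`, `ϑ(pr(y)) = t` iff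
`y - t ∈ I_χ + U(p)n`.) -/
def Lspan (n l : ℕ) (h : l ∣ n) : Submodule ℂ (UQ n) :=
  Submodule.span ℂ
    { x : UQ n | ∃ u ∈ Algebra.adjoin ℂ (pSet n l h), ∃ g ∈ nSet n l h, x = u * g }

/-- A descriptor of a generator of `U(p)`:  `(b, p, q, a, c)` is
`e_{l(p-1)+(a+1), l(q-1)+(c+1)}` if `b = false` and `f_{…}` if `b = true`
(required: `a ≤ c`). -/
def pgElem {n l : ℕ} (h : l ∣ n) :
    Bool × Fin (n / l) × Fin (n / l) × Fin l × Fin l → UQ n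
  | (b, p, q, a, c) => (if b then Uf else Ue) (bidx h p a) (bidx h q c)

/-- Kazhdan degree `2k+2` of a `p`-generator of block offset `k = c - a`. -/
def pgDeg {l m : ℕ} (d : Bool × Fin m × Fin m × Fin l × Fin l) : ℕ :=
  2 * (d.2.2.2.2.val - d.2.2.2.1.val) + 2

/-- Weight `2k` of a `p`-generator of block offset `k = c - a`. -/
def pgWt {l m : ℕ} (d : Bool × Fin m × Fin m × Fin l × Fin l) : ℕ :=
  2 * (d.2.2.2.2.val - d.2.2.2.1.val)

/-- Monomials in the generators of `U(p)` which are "lower" than bidegree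
(Kazhdan degree `D`, weight `W`): either of Kazhdan degree `< D`, or of Kazhdan
degree `≤ D` and weight `< W`. -/
def LowSet (n l : ℕ) (h : l ∣ n) (D W : ℕ) : Set (UQ n) :=
  { x : UQ n | ∃ L : List (Bool × Fin (n / l) × Fin (n / l) × Fin l × Fin l),
      (∀ d ∈ L, d.2.2.2.1.val ≤ d.2.2.2.2.val) ∧
      x = (L.map (pgElem h)).prod ∧
      ((L.map pgDeg).sum < D ∨ ((L.map pgDeg).sum ≤ D ∧ (L.map pgWt).sum < W)) }

/-- The span of the "lower" monomials. -/
def LowSpan (n l : ℕ) (h : l ∣ n) (D W : ℕ) : Submodule ℂ (UQ n) :=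
  Submodule.span ℂ (LowSet n l h D W)

/-! # The super tensor power `U(Q(m))^{⊗l}`

Modeled as the superalgebra with generators `x^i_{pq} = 1^{⊗(l-i)} ⊗ e_{pq} ⊗ 1^{⊗(i-1)}`
(even) and `ξ^i_{pq} = 1^{⊗(l-i)} ⊗ f_{pq} ⊗ 1^{⊗(i-1)}` (odd), subject to the `U(Q(m))`
relations in each tensor slot and to (super-)commutation between different slots. -/

/-- Generators of `U(Q(m))^{⊗l}`: `X i p q` is `x^i_{pq}` and `Xi i p q` is `ξ^i_{pq}`
(`i : Fin l` is the 0-based tensor slot, counted from the right). -/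
inductive TGen (m l : ℕ) : Type
  | X : Fin l → Fin m → Fin m → TGen m l
  | Xi : Fin l → Fin m → Fin m → TGen m l

/-- Kronecker delta on slots. -/
def kdl {l : ℕ} (i j : Fin l) : ℂ := if i = j then 1 else 0

/-- The defining relations of `U(Q(m))^{⊗l}`. -/
inductive TRel (m l : ℕ) : FreeAlgebra ℂ (TGen m l) → FreeAlgebra ℂ (TGen m l) → Prop
  | xx (i i' : Fin l) (p q r s : Fin m) : TRel m l
      (FreeAlgebra.ι ℂ (TGen.X i p q) * FreeAlgebra.ι ℂ (TGen.X i' r s) -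
        FreeAlgebra.ι ℂ (TGen.X i' r s) * FreeAlgebra.ι ℂ (TGen.X i p q))
      ((kdl i i' * kd q r) • FreeAlgebra.ι ℂ (TGen.X i p s) -
        (kdl i i' * kd s p) • FreeAlgebra.ι ℂ (TGen.X i' r q))
  | xxi (i i' : Fin l) (p q r s : Fin m) : TRel m l
      (FreeAlgebra.ι ℂ (TGen.X i p q) * FreeAlgebra.ι ℂ (TGen.Xi i' r s) -
        FreeAlgebra.ι ℂ (TGen.Xi i' r s) * FreeAlgebra.ι ℂ (TGen.X i p q))
      ((kdl i i' * kd q r) • FreeAlgebra.ι ℂ (TGen.Xi i p s) -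
        (kdl i i' * kd s p) • FreeAlgebra.ι ℂ (TGen.Xi i' r q))
  | xixi (i i' : Fin l) (p q r s : Fin m) : TRel m l
      (FreeAlgebra.ι ℂ (TGen.Xi i p q) * FreeAlgebra.ι ℂ (TGen.Xi i' r s) +
        FreeAlgebra.ι ℂ (TGen.Xi i' r s) * FreeAlgebra.ι ℂ (TGen.Xi i p q))
      ((kdl i i' * kd q r) • FreeAlgebra.ι ℂ (TGen.X i p s) +
        (kdl i i' * kd s p) • FreeAlgebra.ι ℂ (TGen.X i' r q))

/-- The superalgebra `U(Q(m))^{⊗l}`. -/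
abbrev TQ (m l : ℕ) := RingQuot (TRel m l)

/-- `x^i_{pq} := 1^{⊗(l-i)} ⊗ e_{pq} ⊗ 1^{⊗(i-1)} ∈ U(Q(m))^{⊗l}`. -/
def xT {m l : ℕ} (i : Fin l) (p q : Fin m) : TQ m l :=
  RingQuot.mkAlgHom ℂ (TRel m l) (FreeAlgebra.ι ℂ (TGen.X i p q))

/-- `ξ^i_{pq} := 1^{⊗(l-i)} ⊗ f_{pq} ⊗ 1^{⊗(i-1)} ∈ U(Q(m))^{⊗l}`. -/
def xiT {m l : ℕ} (i : Fin l) (p q : Fin m) : TQ m l :=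
  RingQuot.mkAlgHom ℂ (TRel m l) (FreeAlgebra.ι ℂ (TGen.Xi i p q))

/-! # The super-Yangian `Y(Q(n))` -/

/-- The index set `{±1, …, ±n}`:  `(false, a)` is the positive index `a` (even),
`(true, a)` is the negative index `-a` (odd). -/
abbrev QIdx (n : ℕ) := Bool × Fin n

/-- Negation `i ↦ -i` on indices. -/
def qneg {n : ℕ} (i : QIdx n) : QIdx n := (!i.1, i.2)

/-- The parity `p(i)`: `0` for positive `i`, `1` for negative `i`. -/
def qpar {n : ℕ} (i : QIdx n) : ℕ := if i.1 then 1 else 0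

/-- Kronecker delta on `{±1, …, ±n}`. -/
def kdq {n : ℕ} (i j : QIdx n) : ℂ := if i = j then 1 else 0

/-- Generators of `Y(Q(n))`: `T m i j` encodes `T^{(m+1)}_{i,j}`. -/
inductive YGen (n : ℕ) : Type
  | T : ℕ → QIdx n → QIdx n → YGen n

/-- `T^{(m)}_{i,j}` in the free algebra, with `T^{(0)}_{i,j} = δ_{ij}`. -/
def Tf {n : ℕ} : ℕ → QIdx n → QIdx n → FreeAlgebra ℂ (YGen n)
  | 0, i, j => algebraMap ℂ _ (kdq i j)
  | m + 1, i, j => FreeAlgebra.ι ℂ (YGen.T m i j)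

/-- The super-commutator `[T^{(a)}_{i,j}, T^{(b)}_{k,l}]` in the free algebra. -/
def ybr {n : ℕ} (a : ℕ) (i j : QIdx n) (b : ℕ) (k l : QIdx n) :
    FreeAlgebra ℂ (YGen n) :=
  Tf a i j * Tf b k l -
    ((-1 : ℂ) ^ ((qpar i + qpar j) * (qpar k + qpar l))) • (Tf b k l * Tf a i j)

/-- The defining relations of the super-Yangian `Y(Q(n))`: for `M, R ≥ 1`,
`(-1)^{p(i)p(k)+p(i)p(l)+p(k)p(l)} ([T^{(M+1)}_{ij}, T^{(R-1)}_{kl}] - [T^{(M-1)}_{ij}, T^{(R+1)}_{kl}])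
 = T^{(M)}_{kj}T^{(R-1)}_{il} + T^{(M-1)}_{kj}T^{(R)}_{il} - T^{(R-1)}_{kj}T^{(M)}_{il}
   - T^{(R)}_{kj}T^{(M-1)}_{il}
   + (-1)^{p(k)+p(l)} (-T^{(M)}_{-k,j}T^{(R-1)}_{-i,l} + T^{(M-1)}_{-k,j}T^{(R)}_{-i,l}
       + T^{(R-1)}_{k,-j}T^{(M)}_{i,-l} - T^{(R)}_{k,-j}T^{(M-1)}_{i,-l})`
(here `M = m+1`, `R = r+1`), together with `T^{(m)}_{-i,-j} = (-1)^m T^{(m)}_{i,j}`. -/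
inductive YRel (n : ℕ) : FreeAlgebra ℂ (YGen n) → FreeAlgebra ℂ (YGen n) → Prop
  | quad (m r : ℕ) (i j k l : QIdx n) : YRel n
      (((-1 : ℂ) ^ (qpar i * qpar k + qpar i * qpar l + qpar k * qpar l)) •
        (ybr (m + 2) i j r k l - ybr m i j (r + 2) k l))
      (Tf (m + 1) k j * Tf r i l + Tf m k j * Tf (r + 1) i l -
        Tf r k j * Tf (m + 1) i l - Tf (r + 1) k j * Tf m i l +
        ((-1 : ℂ) ^ (qpar k + qpar l)) •
          (-(Tf (m + 1) (qneg k) j * Tf r (qneg i) l) +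
            Tf m (qneg k) j * Tf (r + 1) (qneg i) l +
            Tf r k (qneg j) * Tf (m + 1) i (qneg l) -
            Tf (r + 1) k (qneg j) * Tf m i (qneg l)))
  | par (m : ℕ) (i j : QIdx n) : YRel n
      (Tf (m + 1) (qneg i) (qneg j)) (((-1 : ℂ) ^ (m + 1)) • Tf (m + 1) i j)

/-- The super-Yangian `Y(Q(n))`. -/
abbrev YQ (n : ℕ) := RingQuot (YRel n)

/-- The generator `T^{(m)}_{i,j}` of `Y(Q(n))` (with `T^{(0)}_{i,j} = δ_{ij}`). -/
def TY {n : ℕ} (m : ℕ) (i j : QIdx n) : YQ n :=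
  RingQuot.mkAlgHom ℂ (YRel n) (Tf m i j)

/-! # Values of the homomorphisms `U`, `ev`, `ēv` on the generators of `Y(Q(n))`,
and the explicit sums appearing in the main theorems. -/

/-- The value of the homomorphism `U : Y(Q(n)) → U(Q(n))` on the generator
`T^{(r)}_{i,j}`:  `U(T^{(r)}_{i,j}) = (-1)^r e^{(r)}_{j,i}`,
`U(T^{(r)}_{-i,j}) = (-1)^r f^{(r)}_{j,i}` for `i, j > 0`, and the values on the other
generators are forced by `T^{(r)}_{-i,-j} = (-1)^r T^{(r)}_{i,j}`. -/
def Uval {n : ℕ} (r : ℕ) (i j : QIdx n) : UQ n :=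
  (if j.1 then (-1 : ℂ) ^ r else 1) •
    ((-1 : ℂ) ^ r • (if xor i.1 j.1 then fU r j.2 i.2 else eU r j.2 i.2))

/-- The value of the evaluation homomorphism `ev : Y(Q(n)) → U(Q(n))` on `T^{(r)}_{i,j}`:
`ev(T^{(1)}_{i,j}) = -e_{j,i}`, `ev(T^{(1)}_{-i,j}) = -f_{j,i}` for `i, j > 0`,
`ev(T^{(0)}_{i,j}) = δ_{ij}` and `ev(T^{(r)}_{i,j}) = 0` for `r > 1` (with the values on
the remaining generators forced by `T^{(r)}_{-i,-j} = (-1)^r T^{(r)}_{i,j}`). -/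
def evval {n : ℕ} (r : ℕ) (i j : QIdx n) : UQ n :=
  (if j.1 then (-1 : ℂ) ^ r else 1) •
    (match r with
      | 0 => if xor i.1 j.1 then 0 else algebraMap ℂ (UQ n) (kd i.2 j.2)
      | 1 => -(if xor i.1 j.1 then Uf j.2 i.2 else Ue j.2 i.2)
      | _ + 2 => 0)

/-- The value of `ēv = α ∘ ev : Y(Q(n)) → U(Q(n))` on `T^{(r)}_{i,j}`, where `α` is the
principal anti-automorphism of `U(Q(n))`:  `ēv(T^{(1)}_{i,j}) = e_{j,i}`,
`ēv(T^{(1)}_{-i,j}) = f_{j,i}` for `i, j > 0`, `ēv(T^{(0)}_{i,j}) = δ_{ij}`,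
`ēv(T^{(r)}_{i,j}) = 0` for `r > 1`. -/
def bevval {n : ℕ} (r : ℕ) (i j : QIdx n) : UQ n :=
  (if j.1 then (-1 : ℂ) ^ r else 1) •
    (match r with
      | 0 => if xor i.1 j.1 then 0 else algebraMap ℂ (UQ n) (kd i.2 j.2)
      | 1 => (if xor i.1 j.1 then Uf j.2 i.2 else Ue j.2 i.2)
      | _ + 2 => 0)

/-- The sum `Σ_{p_1,…,p_{r-1}} Σ_{l ≥ i_1 ≥ i_2 ≥ … ≥ i_r ≥ 1}
Π_{a=1}^r (x^{i_a}_{p_{a-1},p_a} + (-1)^{r-a} ξ^{i_a}_{p_{a-1},p_a})`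
(with `p_0 = p`, `p_r = q`), an element of `U(Q(m))^{⊗l}`. -/
def chainProdDec (m l : ℕ) (r : ℕ) (p q : Fin m) : TQ m l :=
  ∑ c : Fin (r + 1) → Fin m, ∑ iv : Fin r → Fin l,
    (if c 0 = p ∧ c (Fin.last r) = q ∧ (∀ a b : Fin r, a ≤ b → iv b ≤ iv a)
      then (1 : ℂ) else 0) •
      (List.ofFn fun a : Fin r =>
        xT (iv a) (c a.castSucc) (c a.succ) +
          ((-1 : ℂ) ^ (r - 1 - a.val)) • xiT (iv a) (c a.castSucc) (c a.succ)).prod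

/-- The sum `Σ_{p_1,…,p_{r-1}} Σ_{1 ≤ i_1 < i_2 < … < i_r ≤ l}
Π_{a=1}^r (x^{i_a}_{p_{a-1},p_a} + (-1)^{r-a} ξ^{i_a}_{p_{a-1},p_a})`
(with `p_0 = p`, `p_r = q`), an element of `U(Q(m))^{⊗l}`. -/
def chainProdInc (m l : ℕ) (r : ℕ) (p q : Fin m) : TQ m l :=
  ∑ c : Fin (r + 1) → Fin m, ∑ iv : Fin r → Fin l,
    (if c 0 = p ∧ c (Fin.last r) = q ∧ (∀ a b : Fin r, a < b → iv a < iv b)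
      then (1 : ℂ) else 0) •
      (List.ofFn fun a : Fin r =>
        xT (iv a) (c a.castSucc) (c a.succ) +
          ((-1 : ℂ) ^ (r - 1 - a.val)) • xiT (iv a) (c a.castSucc) (c a.succ)).prod

/-- The elements `z^{(r)}_{±q,p}` of `U(Q(m))^{⊗l}`:  the even (`sgn = false`,
giving `z^{(r)}_{q,p}`) resp. odd (`sgn = true`, giving `z^{(r)}_{-q,p}`) component of
`chainProdDec`, computed using the parity involution `σT` of `U(Q(m))^{⊗l}`;
`z^{(0)}_{q,p} = δ_{qp}`, `z^{(0)}_{-q,p} = 0`. -/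
def zDec {m l : ℕ} (σT : TQ m l →ₐ[ℂ] TQ m l) :
    ℕ → Bool → Fin m → Fin m → TQ m l
  | 0, sgn, q, p => if sgn then 0 else algebraMap ℂ (TQ m l) (kd q p)
  | r + 1, sgn, q, p =>
      (2⁻¹ : ℂ) • (chainProdDec m l (r + 1) p q +
        (if sgn then (-1 : ℂ) else 1) • σT (chainProdDec m l (r + 1) p q))

/-- The elements `z̃^{(r)}_{±q,p}` of `U(Q(m))^{⊗l}` (as `zDec`, with increasing chains). -/
def zInc {m l : ℕ} (σT : TQ m l →ₐ[ℂ] TQ m l) :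
    ℕ → Bool → Fin m → Fin m → TQ m l
  | 0, sgn, q, p => if sgn then 0 else algebraMap ℂ (TQ m l) (kd q p)
  | r + 1, sgn, q, p =>
      (2⁻¹ : ℂ) • (chainProdInc m l (r + 1) p q +
        (if sgn then (-1 : ℂ) else 1) • σT (chainProdInc m l (r + 1) p q))

/-- The explicit formula for the antipode value `S(T^{(r)}_{i,j})` (`r ≥ 1`):
`S(T^{(r)}_{i,j}) = Σ_{m=1}^{r} (-1)^m Σ_{i_1,…,i_{m-1}} Σ_{r_1+⋯+r_m=r, r_a>0}
(-1)^{ν(i,i_1,…,i_{m-1},j)} T^{(r_1)}_{i,i_1} ⋯ T^{(r_m)}_{i_{m-1},j}` where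
`ν(i_0,…,i_m) = Σ_{0≤k<s≤m-1} (p(i_k)+p(i_{k+1}))(p(i_s)+p(i_{s+1}))`. -/
def STval {n : ℕ} (r : ℕ) (i j : QIdx n) : YQ n :=
  ∑ m : Fin r,
    ((-1 : ℂ) ^ (m.val + 1)) •
      ∑ ch : Fin (m.val + 2) → QIdx n, ∑ c : Fin (m.val + 1) → Fin (r + 1),
        (if ch 0 = i ∧ ch (Fin.last (m.val + 1)) = j ∧ (∀ a, 1 ≤ (c a).val) ∧
              (∑ a, (c a).val) = r
          then ((-1 : ℂ) ^ (∑ a : Fin (m.val + 1), ∑ b : Fin (m.val + 1),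
              if a < b then
                (qpar (ch a.castSucc) + qpar (ch a.succ)) *
                  (qpar (ch b.castSucc) + qpar (ch b.succ))
              else 0))
          else 0) •
        (List.ofFn fun a : Fin (m.val + 1) =>
          TY (c a).val (ch a.castSucc) (ch a.succ)).prod

/-!
Let `N` be the matrix of the generators of `U(Q(n))`, `Nₐ` its copy in slot `a`, and
`W(u) = (1 + N₁ u) ⋯ (1 + Nₖ u)`. The transposed generating matrix of the `ev (T i j)`, at `-u`, is
`1 + N u`. Entries of different slots supercommute, which absorbs the signs in the coproduct, so the
transposed generating matrix of the images under `ev^{⊗k} ∘ Δ_k`, at `-u`, is `W(u)`. Sergeev's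
recursion says that the transposed generating matrix of the `U (T i j)` is `(1 + N u)⁻¹`; since
`Δ^op` multiplies in the reverse order, that of the images under `U^{⊗k} ∘ Δ_k^op` is `W(u)⁻¹`. Each
image is generated as an algebra by the coefficients of its generating matrix, and the coefficients
of a matrix series with constant term `1` and of its inverse are polynomials in one another.
-/

section MatrixSeries

open PowerSeries

theorem coeff_mul_eq_sum_fin {A : Type*} [Semiring A] (s : ℕ) (f g : A⟦X⟧) :
    coeff s (f * g) = ∑ t : Fin (s + 1), coeff t.val f * coeff (s - t.val) g := by
  rw [coeff_mul, Finset.Nat.sum_antidiagonal_eq_sum_range_succ_mk, Finset.sum_range]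

theorem coeff_mul_eq_sum_fin' {A : Type*} [Semiring A] (s : ℕ) (f g : A⟦X⟧) :
    coeff s (f * g) = ∑ t : Fin (s + 1), coeff (s - t.val) f * coeff t.val g := by
  rw [coeff_mul, ← Finset.Nat.sum_antidiagonal_swap,
    Finset.Nat.sum_antidiagonal_eq_sum_range_succ_mk, Finset.sum_range]
  rfl

variable {ι : Type*} [Fintype ι] [DecidableEq ι]

section Pencil

variable {A : Type*} [Ring A]

/-- The linear matrix series `1 + N u`, as a unit with the geometric series as inverse. Matrix
series are encoded as matrices with entries in `A⟦X⟧`. -/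
def pencil (N : Matrix ι ι A) : (Matrix ι ι A⟦X⟧)ˣ where
  val := 1 + N.map fun a => C a * X
  inv := Matrix.of fun i j => PowerSeries.mk fun r => ((-N) ^ r) i j
  val_inv := by
    rw [add_mul, one_mul]
    ext i j r
    rcases r with _ | r
    · simp [Matrix.mul_apply, mul_assoc, Matrix.one_apply, apply_ite constantCoeff]
    · simp [Matrix.mul_apply, mul_assoc, coeff_succ_X_mul, pow_succ', Matrix.one_apply,
        apply_ite (coeff (r + 1)), coeff_one]
  inv_val := by
    rw [mul_add, mul_one]
    ext i j r
    rcases r with _ | r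
    · simp [Matrix.mul_apply, ← mul_assoc, Matrix.one_apply, apply_ite constantCoeff]
    · simp [Matrix.mul_apply, ← mul_assoc, coeff_succ_mul_X, pow_succ, Matrix.one_apply,
        apply_ite (coeff (r + 1)), coeff_one]

theorem coeff_pencil (N : Matrix ι ι A) (r : ℕ) (i j : ι) :
    coeff r ((pencil N).val i j) =
      match r with
      | 0 => (1 : Matrix ι ι A) i j
      | 1 => N i j
      | _ + 2 => 0 := by
  rcases r with _ | _ | r <;>
    simp [pencil, Matrix.one_apply, coeff_succ_mul_X, coeff_C, coeff_one, apply_ite constantCoeff,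
      apply_ite (coeff _)]

theorem constantCoeff_pencil (N : Matrix ι ι A) :
    constantCoeff.mapMatrix (pencil N).val = 1 := by
  ext1 i j
  exact (coeff_zero_eq_constantCoeff_apply _).symm.trans (coeff_pencil N 0 i j)

theorem coeff_inv_pencil (N : Matrix ι ι A) (r : ℕ) (i j : ι) :
    coeff r ((pencil N)⁻¹.val i j) = ((-N) ^ r) i j :=
  coeff_mk r fun s => ((-N) ^ s) i j

end Pencil

section SeriesMap

variable {R A B : Type*} [CommRing R] [Ring A] [Algebra R A] [Ring B] [Algebra R B]

/-- The map of matrix series applying `φ` to all coefficients of all entries, as a monoid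
homomorphism so that it acts on units through `Units.map`. -/
def seriesMap (φ : A →ₐ[R] B) : Matrix ι ι A⟦X⟧ →* Matrix ι ι B⟦X⟧ :=
  ((mapAlgHom φ).mapMatrix : Matrix ι ι A⟦X⟧ →ₐ[R] Matrix ι ι B⟦X⟧)

theorem map_pencil (φ : A →ₐ[R] B) (N : Matrix ι ι A) :
    Units.map (seriesMap φ) (pencil N) = pencil (N.map φ) := by
  ext i j
  simp [seriesMap, pencil, mapAlgHom_apply, Matrix.one_apply, apply_ite (PowerSeries.map _)]

end SeriesMap

section Supercentralizer

variable (R : Type*) {A : Type*} [CommRing R] [Ring A] [Algebra R A] (p : ι → ℕ)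

/-- The matrices `N` that supercommute entrywise with `M`, where the entries at position `(i, j)`
are regarded as homogeneous of parity `p i + p j`. -/
def supercentralizer (M : Matrix ι ι A) : Subalgebra R (Matrix ι ι A) where
  carrier := {N | ∀ i j k l,
    M i j * N k l = (-1 : R) ^ ((p i + p j) * (p k + p l)) • (N k l * M i j)}
  mul_mem' := by
    intro N N' hN hN' i j k l
    have parity_add (m : ι) : (p i + p j) * (p k + p m) + (p i + p j) * (p m + p l) =
        (p i + p j) * (p k + p l) + 2 * ((p i + p j) * p m) := by ring
    simp only [Matrix.mul_apply, Finset.mul_sum, Finset.sum_mul, Finset.smul_sum]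
    refine Finset.sum_congr rfl fun m _ => ?_
    rw [← mul_assoc, hN, smul_mul_assoc, mul_assoc, hN', mul_smul_comm, smul_smul, ← pow_add,
      parity_add, pow_add, (even_two_mul _).neg_one_pow, mul_one, mul_assoc]
  add_mem' := by
    intro N N' hN hN' i j k l
    rw [Matrix.add_apply, mul_add, add_mul (N k l), hN, hN', smul_add]
  algebraMap_mem' := by
    intro c i j k l
    rw [Matrix.algebraMap_matrix_apply]
    split_ifs with h
    · rw [h, ← two_mul, mul_left_comm, pow_mul, neg_one_sq, one_pow, one_smul,
        Algebra.commutes]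
    · simp

variable {R p}

theorem mem_supercentralizer_comm {M N : Matrix ι ι A} :
    N ∈ supercentralizer R p M ↔ M ∈ supercentralizer R p N := by
  suffices ∀ M N : Matrix ι ι A, N ∈ supercentralizer R p M → M ∈ supercentralizer R p N from
    ⟨this M N, this N M⟩
  intro M N h i j k l
  rw [h k l i j, smul_smul, mul_comm (p k + p l), ← mul_pow, neg_one_mul, neg_neg, one_pow,
    one_smul]

theorem pencil_mem_supercentralizer {M N : Matrix ι ι A} (h : N ∈ supercentralizer R p M) :
    (pencil N).val ∈ supercentralizer R p (pencil M).val := by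
  have linear_terms : N.map (fun a => C a * X) ∈
      supercentralizer R p (M.map fun a => C a * X) := by
    intro i j k l
    have C_smul (c : R) (a : A) : C (c • a) = c • C a := by
      ext r
      rcases r with _ | r <;> simp [coeff_C]
    have C_mul_X_mul (a b : A) : C a * X * (C b * X) = C (a * b) * X ^ 2 := by
      rw [mul_assoc, ← mul_assoc X, ← commute_X, map_mul, sq]
      simp only [mul_assoc]
    simp only [Matrix.map_apply, C_mul_X_mul]
    rw [h i j k l, C_smul, smul_mul_assoc]
  have h₁ := mem_supercentralizer_comm.mp (add_mem (one_mem _) linear_terms)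
  exact mem_supercentralizer_comm.mp (add_mem (one_mem _) h₁)

end Supercentralizer

section CoeffSubalgebra

variable (R : Type*) {B : Type*} [CommRing R] [Ring B] [Algebra R B]

/-- The subalgebra generated by all coefficients of all entries of a matrix series. -/
def coeffSubalgebra (M : Matrix ι ι B⟦X⟧) : Subalgebra R B :=
  Algebra.adjoin R {b | ∃ r i j, coeff r (M i j) = b}

omit [Fintype ι] [DecidableEq ι] in
theorem coeff_mem_coeffSubalgebra (M : Matrix ι ι B⟦X⟧) (r : ℕ) (i j : ι) :
    coeff r (M i j) ∈ coeffSubalgebra R M :=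
  Algebra.subset_adjoin ⟨r, i, j, rfl⟩

theorem coeffSubalgebra_le_of_mul_eq_one {M N : Matrix ι ι B⟦X⟧}
    (hM : constantCoeff.mapMatrix M = 1) (hMN : M * N = 1) :
    coeffSubalgebra R N ≤ coeffSubalgebra R M := by
  have coeff_one_mem (r : ℕ) (i j : ι) :
      coeff r ((1 : Matrix ι ι B⟦X⟧) i j) ∈ coeffSubalgebra R M := by
    rw [Matrix.one_apply, apply_ite (coeff r), coeff_one, map_zero]
    split_ifs <;> simp
  have hN : N = 1 - (M - 1) * N := by rw [sub_mul, one_mul, hMN, sub_sub_cancel]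
  refine Algebra.adjoin_le ?_
  rintro _ ⟨r, i, j, rfl⟩
  induction r using Nat.strong_induction_on generalizing i with
  | _ r ih =>
    rw [hN, Matrix.sub_apply, map_sub, Matrix.mul_apply, map_sum]
    refine sub_mem (coeff_one_mem r i j) (sum_mem fun k _ => ?_)
    rw [coeff_mul]
    refine sum_mem fun ⟨a, b⟩ hab => ?_
    rw [Finset.HasAntidiagonal.mem_antidiagonal] at hab
    rcases a with _ | a
    · have h₀ : coeff 0 ((M - 1) i k) = 0 := by
        simpa [sub_eq_zero, Matrix.one_apply, apply_ite constantCoeff] using congr($hM i k)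
      rw [h₀, zero_mul]
      exact zero_mem _
    · rw [Matrix.sub_apply, map_sub]
      exact mul_mem (sub_mem (coeff_mem_coeffSubalgebra R M _ i k) (coeff_one_mem _ i k))
        (ih b (by omega) k)

theorem coeffSubalgebra_inv (M : (Matrix ι ι B⟦X⟧)ˣ)
    (hM : constantCoeff.mapMatrix M.val = 1) :
    coeffSubalgebra R M⁻¹.val = coeffSubalgebra R M.val := by
  refine le_antisymm (coeffSubalgebra_le_of_mul_eq_one R hM M.mul_inv)
    (coeffSubalgebra_le_of_mul_eq_one R ?_ M.inv_mul)
  simpa only [map_mul, hM, one_mul, map_one] using congr(constantCoeff.mapMatrix $(M.mul_inv))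

end CoeffSubalgebra

section GeneratingMatrix

variable {R B : Type*} [CommRing R] [Ring B] [Algebra R B]

/-- The generating matrix `∑ r, T r u ^ r` of a family of matrices `T r`, transposed (the
values on `T i j` are built from generators with indices `j, i`) and with `u` rescaled by `c`. -/
def generatingMatrix (c : R) (T : ℕ → ι → ι → B) : Matrix ι ι B⟦X⟧ :=
  Matrix.of fun j i => PowerSeries.mk fun r => c ^ r • T r i j

omit [Fintype ι] [DecidableEq ι] in
theorem coeff_generatingMatrix (c : R) (T : ℕ → ι → ι → B) (r : ℕ) (i j : ι) :
    coeff r (generatingMatrix c T j i) = c ^ r • T r i j :=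
  coeff_mk r fun r => c ^ r • T r i j

theorem seriesMap_generatingMatrix {A : Type*} [Ring A] [Algebra R A] (φ : A →ₐ[R] B) (c : R)
    (T : ℕ → ι → ι → A) :
    seriesMap φ (generatingMatrix c T) = generatingMatrix c fun r i j => φ (T r i j) := by
  ext i j r
  simp [seriesMap, mapAlgHom_apply, coeff_generatingMatrix]

omit [DecidableEq ι] in
theorem generatingMatrix_eq_mul {c : R} {T T' T'' : ℕ → ι → ι → B}
    (h : ∀ s i j, T s i j = ∑ t : Fin (s + 1), ∑ k, T'' (s - t.val) k j * T' t.val i k) :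
    generatingMatrix c T = generatingMatrix c T'' * generatingMatrix c T' := by
  ext j i s
  rw [coeff_generatingMatrix, h, Matrix.mul_apply, map_sum, Finset.sum_comm, Finset.smul_sum]
  refine Finset.sum_congr rfl fun k _ => ?_
  rw [coeff_mul_eq_sum_fin', Finset.smul_sum]
  refine Finset.sum_congr rfl fun t _ => ?_
  rw [coeff_generatingMatrix, coeff_generatingMatrix, smul_mul_smul_comm, ← pow_add,
    Nat.sub_add_cancel t.is_le]

theorem generatingMatrix_eq_mul_of_mem_supercentralizer {c : R} {p : ι → ℕ}
    {T T' T'' : ℕ → ι → ι → B}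
    (hcomm : generatingMatrix c T' ∈ supercentralizer R p (generatingMatrix c T''))
    (h : ∀ s i j, T s i j = ∑ t : Fin (s + 1), ∑ k,
      (-1 : R) ^ ((p i + p k) * (p j + p k)) • (T' t.val i k * T'' (s - t.val) k j)) :
    generatingMatrix c T = generatingMatrix c T'' * generatingMatrix c T' := by
  ext j i s
  rw [coeff_generatingMatrix, h, Matrix.mul_apply, map_sum, Finset.sum_comm, Finset.smul_sum]
  refine Finset.sum_congr rfl fun k _ => ?_
  rw [hcomm j k k i, coeff_smul, coeff_mul_eq_sum_fin, Finset.smul_sum, Finset.smul_sum]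
  refine Finset.sum_congr rfl fun t _ => ?_
  rw [coeff_generatingMatrix, coeff_generatingMatrix, smul_mul_smul_comm, ← pow_add,
    Nat.add_sub_cancel' t.is_le, smul_comm, mul_comm (p i + p k), add_comm (p i)]

omit [Fintype ι] [DecidableEq ι] in
theorem mem_coeffSubalgebra_generatingMatrix (c : Rˣ) (T : ℕ → ι → ι → B) (r : ℕ) (i j : ι) :
    T r i j ∈ coeffSubalgebra R (generatingMatrix (c : R) T) := by
  have h := Subalgebra.smul_mem _
    (coeff_mem_coeffSubalgebra R (generatingMatrix (c : R) T) r j i) ((c⁻¹ ^ r : Rˣ) : R)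
  rwa [coeff_generatingMatrix, smul_smul, ← Units.val_pow_eq_pow_val, ← Units.val_mul, ← mul_pow,
    inv_mul_cancel, one_pow, Units.val_one, one_smul] at h

end GeneratingMatrix

end MatrixSeries

section Queer

variable {n l : ℕ}

section QueerMatrix

variable {R A B : Type*} [CommRing R] [Ring A] [Ring B]

/-- The block matrix `[[x, ξ], [-ξ, -x]]` indexed by `{±1, …, ±n}`. The signs are those for which
`1 + queerMatrix x ξ * u` is the generating matrix, transposed and with `u` replaced by `-u`, of
the evaluation homomorphism with values `-x`, `-ξ`. -/
def queerMatrix (x ξ : Fin n → Fin n → A) : Matrix (QIdx n) (QIdx n) A :=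
  Matrix.of fun
    | (false, i), (false, j) => x i j
    | (false, i), (true, j) => ξ i j
    | (true, i), (false, j) => -ξ i j
    | (true, i), (true, j) => -x i j

theorem map_queerMatrix [Algebra R A] [Algebra R B] (φ : A →ₐ[R] B)
    {x ξ : Fin n → Fin n → A} {y η : Fin n → Fin n → B}
    (hx : ∀ i j, φ (x i j) = y i j) (hξ : ∀ i j, φ (ξ i j) = η i j) :
    (queerMatrix x ξ).map φ = queerMatrix y η := by
  ext ⟨_ | _, i⟩ ⟨_ | _, j⟩ <;> simp [queerMatrix, hx, hξ]

theorem queerMatrix_mem_supercentralizer [Algebra R A] {x ξ y η : Fin n → Fin n → A}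
    (hxy : ∀ i j k m, x i j * y k m = y k m * x i j)
    (hxη : ∀ i j k m, x i j * η k m = η k m * x i j)
    (hξy : ∀ i j k m, ξ i j * y k m = y k m * ξ i j)
    (hξη : ∀ i j k m, ξ i j * η k m = -(η k m * ξ i j)) :
    queerMatrix y η ∈ supercentralizer R qpar (queerMatrix x ξ) := by
  rintro ⟨_ | _, i⟩ ⟨_ | _, j⟩ ⟨_ | _, k⟩ ⟨_ | _, m⟩ <;>
    simp [queerMatrix, qpar, hxy, hxη, hξy, hξη, Even.neg_one_pow (n := 4) (by decide)]

end QueerMatrix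

theorem Uval_zero (i j : QIdx n) : Uval 0 i j = if j = i then 1 else 0 := by
  rcases i with ⟨_ | _, i⟩ <;> rcases j with ⟨_ | _, j⟩ <;> simp [Uval, eU, fU, efU, kd, eq_comm]

theorem Uval_succ (r : ℕ) (i j : QIdx n) :
    Uval (r + 1) i j = ∑ k, -queerMatrix Ue Uf j k * Uval r i k := by
  rw [Fintype.sum_prod_type, Fintype.sum_bool]
  rcases i with ⟨_ | _, i⟩ <;> rcases j with ⟨_ | _, j⟩ <;>
    rcases neg_one_pow_eq_or ℂ r with h | h <;>
    simp [Uval, queerMatrix, eU, fU, efU, pow_succ, h, add_comm, Finset.smul_sum,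
      neg_mul (α := UQ n), mul_neg (α := UQ n), neg_one_smul (M := UQ n) ℂ]

theorem Uval_eq_pow_apply (r : ℕ) (i j : QIdx n) :
    Uval r i j = ((-queerMatrix Ue Uf) ^ r) j i := by
  induction r generalizing j with
  | zero => rw [Uval_zero, pow_zero, Matrix.one_apply]
  | succ r ih => simp only [Uval_succ, ih, pow_succ', Matrix.mul_apply, Matrix.neg_apply]

theorem generatingMatrix_Uval :
    generatingMatrix (1 : ℂ) (Uval (n := n)) = (pencil (queerMatrix Ue Uf))⁻¹.val := by
  ext j i r
  rw [coeff_generatingMatrix, coeff_inv_pencil, one_pow, one_smul, Uval_eq_pow_apply]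

theorem generatingMatrix_evval :
    generatingMatrix (-1 : ℂ) (evval (n := n)) = (pencil (queerMatrix Ue Uf)).val := by
  ext ⟨bj, j⟩ ⟨bi, i⟩ r
  rw [coeff_generatingMatrix, coeff_pencil]
  cases bi <;> cases bj <;> rcases r with _ | _ | r <;>
    simp [evval, queerMatrix, Matrix.one_apply, kd, eq_comm, neg_one_smul (M := UQ n) ℂ]

/-- The matrix `[[x, ξ], [-ξ, -x]]` of the generators in tensor slot `a` of `U(Q(n))^{⊗l}`. -/
def slotMatrix (a : Fin l) : Matrix (QIdx n) (QIdx n) (TQ n l) :=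
  queerMatrix (xT a) (xiT a)

theorem xT_mul_xT_of_ne {a b : Fin l} (h : a ≠ b) (p q r s : Fin n) :
    (xT a p q : TQ n l) * xT b r s = xT b r s * xT a p q := by
  have rel := RingQuot.mkAlgHom_rel ℂ (TRel.xx a b p q r s)
  simp only [kdl, h, if_false, zero_mul, zero_smul, sub_zero, map_sub, map_mul, map_zero] at rel
  exact sub_eq_zero.mp rel

theorem xT_mul_xiT_of_ne {a b : Fin l} (h : a ≠ b) (p q r s : Fin n) :
    (xT a p q : TQ n l) * xiT b r s = xiT b r s * xT a p q := by
  have rel := RingQuot.mkAlgHom_rel ℂ (TRel.xxi a b p q r s)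
  simp only [kdl, h, if_false, zero_mul, zero_smul, sub_zero, map_sub, map_mul, map_zero] at rel
  exact sub_eq_zero.mp rel

theorem xiT_mul_xiT_of_ne {a b : Fin l} (h : a ≠ b) (p q r s : Fin n) :
    (xiT a p q : TQ n l) * xiT b r s = -(xiT b r s * xiT a p q) := by
  have rel := RingQuot.mkAlgHom_rel ℂ (TRel.xixi a b p q r s)
  simp only [kdl, h, if_false, zero_mul, zero_smul, add_zero, map_add, map_mul, map_zero] at rel
  exact eq_neg_of_add_eq_zero_left rel

theorem slotMatrix_mem_supercentralizer {a b : Fin l} (h : a ≠ b) :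
    (slotMatrix b : Matrix (QIdx n) (QIdx n) (TQ n l)) ∈
      supercentralizer ℂ qpar (slotMatrix a) :=
  queerMatrix_mem_supercentralizer (xT_mul_xT_of_ne h) (xT_mul_xiT_of_ne h)
    (fun p q r s => (xT_mul_xiT_of_ne h.symm r s p q).symm) (xiT_mul_xiT_of_ne h)

/-- The product `(1 + N₁ u) (1 + N₂ u) ⋯ (1 + Nₗ u)` over all slots, `Nₐ` the matrix of slot `a`. -/
def slotProduct (n l : ℕ) : (Matrix (QIdx n) (QIdx n) (PowerSeries (TQ n l)))ˣ :=
  (List.ofFn fun a : Fin l => pencil (slotMatrix a)).prod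

theorem slotProduct_one : slotProduct n 1 = pencil (slotMatrix 0) := by
  simp [slotProduct]

theorem map_slotProduct {m : ℕ} {φ : TQ n l →ₐ[ℂ] TQ n m} {σ : Fin l → Fin m}
    (hφ : ∀ a, (slotMatrix a).map φ = slotMatrix (σ a)) :
    Units.map (seriesMap φ) (slotProduct n l) =
      (List.ofFn fun a => pencil (slotMatrix (σ a))).prod := by
  simp only [slotProduct, map_list_prod, List.map_ofFn, Function.comp_def, map_pencil, hφ]

theorem slotProduct_succ {φ : TQ n l →ₐ[ℂ] TQ n (l + 1)}
    (hφ : ∀ a, (slotMatrix a).map φ = slotMatrix a.succ) :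
    slotProduct n (l + 1) = pencil (slotMatrix 0) * Units.map (seriesMap φ) (slotProduct n l) := by
  rw [map_slotProduct hφ, slotProduct, List.ofFn_succ, List.prod_cons]

theorem slotProduct_succ' {φ : TQ n l →ₐ[ℂ] TQ n (l + 1)}
    (hφ : ∀ a, (slotMatrix a).map φ = slotMatrix a.castSucc) :
    slotProduct n (l + 1) =
      Units.map (seriesMap φ) (slotProduct n l) * pencil (slotMatrix (Fin.last l)) := by
  rw [map_slotProduct hφ, slotProduct, List.ofFn_succ', List.concat_eq_append, List.prod_append,
    List.prod_singleton]

theorem constantCoeff_slotProduct :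
    PowerSeries.constantCoeff.mapMatrix (slotProduct n l).val = 1 := by
  rw [slotProduct, ← Units.coeHom_apply, map_list_prod, map_list_prod]
  refine List.prod_eq_one ?_
  simp only [List.map_ofFn, List.forall_mem_ofFn_iff]
  exact fun a => constantCoeff_pencil _

theorem map_slotProduct_mem_supercentralizer {φ : TQ n l →ₐ[ℂ] TQ n (l + 1)}
    (hφ : ∀ a, (slotMatrix a).map φ = slotMatrix a.succ) :
    (Units.map (seriesMap φ) (slotProduct n l)).val ∈
      supercentralizer ℂ qpar (pencil (slotMatrix 0)).val := by
  rw [map_slotProduct hφ, ← Units.coeHom_apply (List.prod _), map_list_prod]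
  refine list_prod_mem ?_
  simp only [List.map_ofFn, List.forall_mem_ofFn_iff]
  exact fun a => pencil_mem_supercentralizer
    (slotMatrix_mem_supercentralizer (Fin.succ_ne_zero a).symm)

theorem range_eq_coeffSubalgebra {B : Type*} [Ring B] [Algebra ℂ B] (φ : YQ n →ₐ[ℂ] B) (c : ℂˣ) :
    φ.range = coeffSubalgebra ℂ (generatingMatrix (c : ℂ) fun r i j => φ (TY r i j)) := by
  refine le_antisymm ?_ (Algebra.adjoin_le ?_)
  · rintro _ ⟨y, rfl⟩
    obtain ⟨x, rfl⟩ := RingQuot.mkAlgHom_surjective ℂ (YRel n) y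
    induction x using FreeAlgebra.induction with
    | grade0 z => simp
    | grade1 g =>
      obtain ⟨m, i, j⟩ := g
      exact mem_coeffSubalgebra_generatingMatrix c (fun r i j => φ (TY r i j)) (m + 1) i j
    | mul x y hx hy => simpa using mul_mem hx hy
    | add x y hx hy => simpa using add_mem hx hy
  · rintro _ ⟨r, j, i, rfl⟩
    rw [coeff_generatingMatrix]
    exact Subalgebra.smul_mem φ.range (φ.mem_range_self (TY r i j)) _

section CoproductStep

variable {ε : UQ n →ₐ[ℂ] TQ n l} {a : Fin l}

theorem generatingMatrix_map_Uval (hε : (queerMatrix Ue Uf).map ε = slotMatrix a) :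
    generatingMatrix (1 : ℂ) (fun r i j => ε (Uval r i j)) = (pencil (slotMatrix a))⁻¹.val := by
  rw [← seriesMap_generatingMatrix, generatingMatrix_Uval, ← Units.coe_map_inv, map_pencil, hε]

theorem generatingMatrix_map_evval (hε : (queerMatrix Ue Uf).map ε = slotMatrix a) :
    generatingMatrix (-1 : ℂ) (fun r i j => ε (evval r i j)) = (pencil (slotMatrix a)).val := by
  rw [← seriesMap_generatingMatrix, generatingMatrix_evval, ← hε, ← map_pencil, Units.coe_map]

end CoproductStep

theorem generatingMatrix_op_succ {T : ℕ → QIdx n → QIdx n → TQ n l}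
    {T' : ℕ → QIdx n → QIdx n → TQ n (l + 1)}
    {ε : UQ n →ₐ[ℂ] TQ n (l + 1)} {φ : TQ n l →ₐ[ℂ] TQ n (l + 1)}
    (hε : (queerMatrix Ue Uf).map ε = slotMatrix (Fin.last l))
    (hφ : ∀ a, (slotMatrix a).map φ = slotMatrix a.castSucc)
    (hT : generatingMatrix (1 : ℂ) T = (slotProduct n l)⁻¹.val)
    (hT' : ∀ s i j, T' s i j =
      ∑ t : Fin (s + 1), ∑ k, ε (Uval (s - t.val) k j) * φ (T t.val i k)) :
    generatingMatrix (1 : ℂ) T' = (slotProduct n (l + 1))⁻¹.val := by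
  rw [generatingMatrix_eq_mul (T' := fun r i j => φ (T r i j))
      (T'' := fun r i j => ε (Uval r i j)) hT',
    generatingMatrix_map_Uval hε, ← seriesMap_generatingMatrix, hT, slotProduct_succ' hφ,
    mul_inv_rev, Units.val_mul, Units.coe_map_inv]

theorem generatingMatrix_ev_succ {T : ℕ → QIdx n → QIdx n → TQ n l}
    {T' : ℕ → QIdx n → QIdx n → TQ n (l + 1)}
    {ε : UQ n →ₐ[ℂ] TQ n (l + 1)} {φ : TQ n l →ₐ[ℂ] TQ n (l + 1)}
    (hε : (queerMatrix Ue Uf).map ε = slotMatrix 0)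
    (hφ : ∀ a, (slotMatrix a).map φ = slotMatrix a.succ)
    (hT : generatingMatrix (-1 : ℂ) T = (slotProduct n l).val)
    (hT' : ∀ s i j, T' s i j = ∑ t : Fin (s + 1), ∑ k,
      (-1 : ℂ) ^ ((qpar i + qpar k) * (qpar j + qpar k)) •
        (φ (T t.val i k) * ε (evval (s - t.val) k j))) :
    generatingMatrix (-1 : ℂ) T' = (slotProduct n (l + 1)).val := by
  have gen_slot := generatingMatrix_map_evval hε
  have gen_shift : generatingMatrix (-1 : ℂ) (fun r i j => φ (T r i j)) =
      (Units.map (seriesMap φ) (slotProduct n l)).val := by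
    rw [← seriesMap_generatingMatrix, hT, Units.coe_map]
  rw [generatingMatrix_eq_mul_of_mem_supercentralizer (p := qpar)
      (T' := fun r i j => φ (T r i j)) (T'' := fun r i j => ε (evval r i j)) ?_ hT',
    gen_slot, gen_shift, slotProduct_succ hφ, Units.val_mul]
  rw [gen_slot, gen_shift]
  exact map_slotProduct_mem_supercentralizer hφ

end Queer

/-- For every `k ≥ 1` and `n ≥ 1`, the image of `Y(Q(n))` in
`U(Q(n))^{⊗k}` under `U^{⊗k}∘Δ_k^{op}` coincides with its image under `ev^{⊗k}∘Δ_k`.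
The two families of algebra homomorphisms `Gop j = U^{⊗j}∘Δ_j^{op}` and
`Gev j = ev^{⊗j}∘Δ_j` are characterized on generators as in Statements 10 and 15. -/
theorem statement13 (n k : ℕ) (hn : 0 < n) (hk : 1 ≤ k)
    (emb : ∀ j : ℕ, Fin j → (UQ n →ₐ[ℂ] TQ n j))
    (hembx : ∀ (j : ℕ) (a : Fin j) (i i' : Fin n), emb j a (Ue i i') = xT a i i')
    (hembxi : ∀ (j : ℕ) (a : Fin j) (i i' : Fin n), emb j a (Uf i i') = xiT a i i')
    (ish : ∀ j : ℕ, TQ n j →ₐ[ℂ] TQ n (j + 1))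
    (hishx : ∀ (j : ℕ) (a : Fin j) (i i' : Fin n), ish j (xT a i i') = xT a.castSucc i i')
    (hishxi : ∀ (j : ℕ) (a : Fin j) (i i' : Fin n), ish j (xiT a i i') = xiT a.castSucc i i')
    (ishUp : ∀ j : ℕ, TQ n j →ₐ[ℂ] TQ n (j + 1))
    (hishUpx : ∀ (j : ℕ) (a : Fin j) (i i' : Fin n), ishUp j (xT a i i') = xT a.succ i i')
    (hishUpxi : ∀ (j : ℕ) (a : Fin j) (i i' : Fin n), ishUp j (xiT a i i') = xiT a.succ i i')
    (Gop : ∀ j : ℕ, YQ n →ₐ[ℂ] TQ n j)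
    (hGop1 : ∀ (s : ℕ) (i j : QIdx n), Gop 1 (TY s i j) = emb 1 0 (Uval s i j))
    (hGopStep : ∀ (j : ℕ), 1 ≤ j → ∀ (s : ℕ) (i i' : QIdx n),
      Gop (j + 1) (TY s i i') =
        ∑ t : Fin (s + 1), ∑ kk : QIdx n,
          emb (j + 1) (Fin.last j) (Uval (s - t.val) kk i') *
            ish j (Gop j (TY t.val i kk)))
    (Gev : ∀ j : ℕ, YQ n →ₐ[ℂ] TQ n j)
    (hGev1 : ∀ (s : ℕ) (i j : QIdx n), Gev 1 (TY s i j) = emb 1 0 (evval s i j))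
    (hGevStep : ∀ (j : ℕ), 1 ≤ j → ∀ (s : ℕ) (i i' : QIdx n),
      Gev (j + 1) (TY s i i') =
        ∑ t : Fin (s + 1), ∑ kk : QIdx n,
          ((-1 : ℂ) ^ ((qpar i + qpar kk) * (qpar i' + qpar kk))) •
            (ishUp j (Gev j (TY t.val i kk)) * emb (j + 1) 0 (evval (s - t.val) kk i'))) :
    Set.range ⇑(Gop k) = Set.range ⇑(Gev k) := by
  have emb_slot (l : ℕ) (a : Fin l) : (queerMatrix Ue Uf).map (emb l a) = slotMatrix a :=
    map_queerMatrix _ (hembx l a) (hembxi l a)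
  have ish_slot (l : ℕ) (a : Fin l) : (slotMatrix a).map (ish l) = slotMatrix a.castSucc :=
    map_queerMatrix _ (hishx l a) (hishxi l a)
  have ishUp_slot (l : ℕ) (a : Fin l) : (slotMatrix a).map (ishUp l) = slotMatrix a.succ :=
    map_queerMatrix _ (hishUpx l a) (hishUpxi l a)
  have gen_op (l : ℕ) (hl : 1 ≤ l) : generatingMatrix (1 : ℂ) (fun r i j => Gop l (TY r i j)) =
      (slotProduct n l)⁻¹.val := by
    induction l, hl using Nat.le_induction with
    | base => simp only [hGop1, slotProduct_one, generatingMatrix_map_Uval (emb_slot 1 0)]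
    | succ l hl ih =>
      exact generatingMatrix_op_succ (emb_slot _ _) (ish_slot l) ih (hGopStep l hl)
  have gen_ev (l : ℕ) (hl : 1 ≤ l) : generatingMatrix (-1 : ℂ) (fun r i j => Gev l (TY r i j)) =
      (slotProduct n l).val := by
    induction l, hl using Nat.le_induction with
    | base => simp only [hGev1, slotProduct_one, generatingMatrix_map_evval (emb_slot 1 0)]
    | succ l hl ih =>
      exact generatingMatrix_ev_succ (emb_slot _ _) (ishUp_slot l) ih (hGevStep l hl)
  have range_eq : (Gop k).range = (Gev k).range := by
    rw [range_eq_coeffSubalgebra (Gop k) 1, range_eq_coeffSubalgebra (Gev k) (-1), Units.val_neg,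
      Units.val_one, gen_op k hk, gen_ev k hk, coeffSubalgebra_inv ℂ _ constantCoeff_slotProduct]
  exact congr(($range_eq : Set (TQ n k)))
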